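/- arXiv:math/0308280 — 2 statements merged into one kernel-verified Lean document; each statement's English description precedes it below -/
import Mathlib

section
/- For a finite simple graph G, the toric ideal I_G is generated in degree ≤ 2 if and only if G is a forest (i.e., G contains no cycle). -/
open MvPolynomial Finset

namespace BinaryGraphModels

variable {V : Type} [Fintype V] [DecidableEq V]

/-- The monomial map `φ_G` of the binary graph model: the variable `p_I` is sent to the
product over edges `{j,k}` of the variable `t^{jk}_{I(j)I(k)}` (encoded as the unordered pair
`{(j, I j), (k, I k)}`) times the product over isolated vertices `l` of `t^{l}_{I(l)}`. -/
noncomputable def phi (G : SimpleGraph V) :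
    MvPolynomial (V → Bool) ℂ →ₐ[ℂ] MvPolynomial (Sym2 (V × Bool) ⊕ (V × Bool)) ℂ := by
  letI : DecidableRel G.Adj := Classical.decRel _
  exact aeval fun I : V → Bool =>
    (∏ e ∈ G.edgeFinset,
      (X (Sum.inl (Sym2.map (fun v => (v, I v)) e)) :
        MvPolynomial (Sym2 (V × Bool) ⊕ (V × Bool)) ℂ)) *
    ∏ l ∈ univ.filter (fun l : V => ∀ k, ¬ G.Adj l k), X (Sum.inr (l, I l))

/-- The toric ideal `I_G` of the binary graph model of `G`. -/
noncomputable def toricIdeal (G : SimpleGraph V) : Ideal (MvPolynomial (V → Bool) ℂ) :=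
  RingHom.ker (phi G).toRingHom

/-- `I_G` is generated in degree at most `d`. -/
def GenInDegLE (G : SimpleGraph V) (d : ℕ) : Prop :=
  toricIdeal G =
    Ideal.span {f : MvPolynomial (V → Bool) ℂ | f ∈ toricIdeal G ∧ f.totalDegree ≤ d}

/-- The Markov width `μ(G)`: the least `d` such that `I_G` is generated in degree `≤ d`. -/
noncomputable def markovWidth (G : SimpleGraph V) : ℕ :=
  sInf {d : ℕ | GenInDegLE G d}

/-- `f` is a minimal generator of `I_G`, i.e. `f ∈ I_G` and `f ∉ 𝔪 · I_G` where `𝔪` is the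
irrelevant maximal ideal generated by all the variables. -/
def IsMinimalGenerator (G : SimpleGraph V) (f : MvPolynomial (V → Bool) ℂ) : Prop :=
  f ∈ toricIdeal G ∧
    f ∉ Ideal.span (Set.range (X : (V → Bool) → MvPolynomial (V → Bool) ℂ)) * toricIdeal G

/-- Two integer tables have the same `G`-marginals: equal two-way marginals along every edge
and equal one-way marginals at every isolated vertex. -/
def MarginalsEq (G : SimpleGraph V) (v₁ v₂ : (V → Bool) → ℤ) : Prop :=
  (∀ j k : V, G.Adj j k → ∀ a b : Bool,
    (∑ I : V → Bool, if I j = a ∧ I k = b then v₁ I else 0) =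
    (∑ I : V → Bool, if I j = a ∧ I k = b then v₂ I else 0)) ∧
  (∀ l : V, (∀ k, ¬ G.Adj l k) → ∀ a : Bool,
    (∑ I : V → Bool, if I l = a then v₁ I else 0) =
    (∑ I : V → Bool, if I l = a then v₂ I else 0))

/-- `B` is a Markov basis for `G`: any two nonnegative tables with the same `G`-marginals are
connected by a path of moves from `±B` staying nonnegative. -/
def IsMarkovBasis (G : SimpleGraph V) (B : Finset ((V → Bool) → ℤ)) : Prop :=
  ∀ v₁ v₂ : (V → Bool) → ℤ, (∀ I, 0 ≤ v₁ I) → (∀ I, 0 ≤ v₂ I) →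
    MarginalsEq G v₁ v₂ →
    ∃ L : List ((V → Bool) → ℤ),
      (∀ u ∈ L, u ∈ B ∨ -u ∈ B) ∧
      v₁ + L.sum = v₂ ∧
      ∀ n : ℕ, n ≤ L.length → ∀ I, 0 ≤ (v₁ + (L.take n).sum) I

/-- The binomial `p^{u⁺} - p^{u⁻}` associated to an integer table `u`. -/
noncomputable def moveBinomial (u : (V → Bool) → ℤ) : MvPolynomial (V → Bool) ℂ :=
  (∏ I : V → Bool, X I ^ (u I).toNat) - ∏ I : V → Bool, X I ^ (-u I).toNat

end BinaryGraphModels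
namespace BinaryGraphModels
variable {V : Type} [Fintype V] [DecidableEq V]

set_option linter.unusedSectionVars false

noncomputable def low (G : SimpleGraph V) : Ideal (MvPolynomial (V → Bool) ℂ) :=
  Ideal.span {f : MvPolynomial (V → Bool) ℂ | f ∈ toricIdeal G ∧ f.totalDegree ≤ 2}

lemma mem_toric {G : SimpleGraph V} {f} : f ∈ toricIdeal G ↔ phi G f = 0 := by
  unfold toricIdeal
  exact RingHom.mem_ker

lemma low_le (G : SimpleGraph V) : low G ≤ toricIdeal G := by
  unfold low
  rw [Ideal.span_le]
  intro f hf
  exact hf.1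

lemma phi_X (G : SimpleGraph V) [DecidableRel G.Adj] (I : V → Bool) :
    phi G (X I) = (∏ e ∈ G.edgeFinset,
      (X (Sum.inl (Sym2.map (fun v => (v, I v)) e)) :
        MvPolynomial (Sym2 (V × Bool) ⊕ (V × Bool)) ℂ)) *
    ∏ l ∈ univ.filter (fun l : V => ∀ k, ¬ G.Adj l k), X (Sum.inr (l, I l)) := by
  unfold phi
  simp only [aeval_X]
  congr!

/-- the product of the variables given by the rows -/
noncomputable def mon {ι : Type} [Fintype ι] (A : ι → V → Bool) : MvPolynomial (V → Bool) ℂ :=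
  ∏ i, X (A i)

/-- Sufficient local conditions for two products to have the same image. -/
lemma phi_mon_congr (G : SimpleGraph V) {ι : Type} [Fintype ι] (A B : ι → V → Bool)
    (hE : ∀ x y, G.Adj x y →
      ∏ i, (X (Sum.inl s((x, A i x), (y, A i y))) :
        MvPolynomial (Sym2 (V × Bool) ⊕ (V × Bool)) ℂ) =
      ∏ i, X (Sum.inl s((x, B i x), (y, B i y))))
    (hI : ∀ x, ∏ i, (X (Sum.inr (x, A i x)) :
        MvPolynomial (Sym2 (V × Bool) ⊕ (V × Bool)) ℂ) = ∏ i, X (Sum.inr (x, B i x))) :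
    phi G (mon A) = phi G (mon B) := by
  classical
  simp only [mon, map_prod, phi_X, Finset.prod_mul_distrib]
  congr 1
  · rw [Finset.prod_comm, Finset.prod_comm (s := univ)]
    refine Finset.prod_congr rfl fun e he => ?_
    induction e using Sym2.ind with
    | _ x y => exact hE x y (by simpa using he)
  · rw [Finset.prod_comm, Finset.prod_comm (s := univ)]
    exact Finset.prod_congr rfl fun x _ => hI x

lemma mon_pair (I J : V → Bool) : mon ![I, J] = X I * X J := by
  simp [mon, Fin.prod_univ_two]

lemma mon_eq {ι : Type} [Fintype ι] (A : ι → V → Bool) :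
    mon A = monomial (∑ i, Finsupp.single (A i) 1) (1 : ℂ) := by
  rw [monomial_sum_one]
  rfl

lemma exists_sum (m : (V → Bool) →₀ ℕ) : ∃ (n : ℕ) (A : Fin n → V → Bool),
    m = ∑ i, Finsupp.single (A i) 1 := by
  induction m using Finsupp.induction_linear with
  | zero => exact ⟨0, Fin.elim0, by simp⟩
  | add f g hf hg =>
    obtain ⟨n, A, hA⟩ := hf
    obtain ⟨m, B, hB⟩ := hg
    exact ⟨n + m, Fin.append A B, by simp [Fin.sum_univ_add, hA, hB]⟩
  | single a k => exact ⟨k, fun _ => a, by simp⟩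

lemma exists_mon (m : (V → Bool) →₀ ℕ) : ∃ (n : ℕ) (A : Fin n → V → Bool),
    (monomial m 1 : MvPolynomial (V → Bool) ℂ) = mon A := by
  obtain ⟨n, A, h⟩ := exists_sum m
  exact ⟨n, A, by rw [mon_eq, h]⟩

lemma exists_pi (G : SimpleGraph V) (m : (V → Bool) →₀ ℕ) : ∃ k : (Sym2 (V × Bool) ⊕ (V × Bool)) →₀ ℕ,
    phi G (monomial m 1) = monomial k 1 := by
  classical
  have key : ∀ I, ∃ k : (Sym2 (V × Bool) ⊕ (V × Bool)) →₀ ℕ, phi G (X I) = monomial k 1 := by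
    intro I
    rw [phi_X]
    refine ⟨(∑ e ∈ G.edgeFinset, Finsupp.single (Sum.inl (Sym2.map (fun v => (v, I v)) e)) 1) + 
      ∑ l ∈ univ.filter (fun l : V => ∀ k, ¬ G.Adj l k), Finsupp.single (Sum.inr (l, I l)) 1, ?_⟩
    rw [← one_mul (1:ℂ), ← monomial_mul, monomial_sum_one, monomial_sum_one]
    rfl
  choose k hk using key
  obtain ⟨n, A, hA⟩ := exists_mon m
  rw [hA, mon, map_prod]
  exact ⟨∑ i, k (A i), by rw [monomial_sum_one]; simp [hk]⟩

/-- The counting principle. -/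
lemma count_of_eval (G : SimpleGraph V) (P : (V → Bool) → Prop) [DecidablePred P]
    (χ : Sym2 (V × Bool) ⊕ (V × Bool) → ℂ)
    (h : ∀ I, eval χ (phi G (X I)) = if P I then 2 else 1)
    {ι κ : Type} [Fintype ι] [Fintype κ] (A : ι → V → Bool) (B : κ → V → Bool)
    (hAB : phi G (mon A) = phi G (mon B)) :
    #{i | P (A i)} = #{i | P (B i)} := by
  have := congrArg (eval χ) hAB
  simp only [mon, map_prod, h, Finset.prod_ite, Finset.prod_const, one_pow, mul_one] at this
  exact Nat.pow_right_injective (le_refl 2) (by exact_mod_cast this)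

lemma eval_edge (G : SimpleGraph V) {j k : V} (hjk : G.Adj j k) (T : Bool → Bool → Prop)
    [∀ a b, Decidable (T a b)] : 
    ∃ χ : Sym2 (V × Bool) ⊕ (V × Bool) → ℂ,
      ∀ I, eval χ (phi G (X I)) = if T (I j) (I k) then 2 else 1 := by
  classical
  refine ⟨Sum.elim (fun e => if ∃ a b, T a b ∧ e = s((j,a),(k,b)) then 2 else 1) (fun _ => 1), ?_⟩
  intro I
  have hne : j ≠ k := hjk.ne
  rw [phi_X]
  simp only [map_mul, map_prod, eval_X, Sum.elim_inl, Sum.elim_inr, Finset.prod_const_one, mul_one]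
  rw [Finset.prod_eq_single s(j,k)]
  · congr 1
    simp only [Sym2.map_mk, eq_iff_iff]
    constructor
    · rintro ⟨a, b, hT, he⟩
      simp at he
      grind
    · intro h
      exact ⟨_, _, h, rfl⟩
  · intro e he hne'
    rw [if_neg]
    rintro ⟨a, b, hT, h⟩
    apply hne'
    have := congrArg (Sym2.map Prod.fst) h
    rw [Sym2.map_map] at this
    simpa [Function.comp_def] using this
  · intro h
    exact absurd (by simpa using hjk) h

lemma eval_iso (G : SimpleGraph V) {l : V} (hl : ∀ k, ¬ G.Adj l k) (T : Bool → Prop)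
    [DecidablePred T] :
    ∃ χ : Sym2 (V × Bool) ⊕ (V × Bool) → ℂ,
      ∀ I, eval χ (phi G (X I)) = if T (I l) then 2 else 1 := by
  classical
  refine ⟨Sum.elim (fun _ => 1) (fun p => if T p.2 ∧ p.1 = l then 2 else 1), ?_⟩
  intro I
  rw [phi_X]
  simp only [map_mul, map_prod, eval_X, Sum.elim_inl, Sum.elim_inr, Finset.prod_const_one, one_mul]
  rw [Finset.prod_eq_single l]
  · simp
  · intro e he hne'
    simp [hne']
  · intro h
    exact absurd (by simpa using hl) h

lemma eval_vertex (G : SimpleGraph V) (l : V) (T : Bool → Prop) [DecidablePred T] :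
    ∃ χ : Sym2 (V × Bool) ⊕ (V × Bool) → ℂ,
      ∀ I, eval χ (phi G (X I)) = if T (I l) then 2 else 1 := by
  by_cases hl : ∀ k, ¬ G.Adj l k
  · exact eval_iso G hl T
  · push Not at hl
    obtain ⟨k, hk⟩ := hl
    exact eval_edge G hk (fun a _ => T a)

lemma ker_le (G : SimpleGraph V) (J : Ideal (MvPolynomial (V → Bool) ℂ))
    (hJ : ∀ (n m : ℕ) (A : Fin n → V → Bool) (B : Fin m → V → Bool),
      phi G (mon A) = phi G (mon B) → mon A - mon B ∈ J) : toricIdeal G ≤ J := by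
  classical
  choose π hπ using exists_pi G
  let r : ((Sym2 (V × Bool) ⊕ (V × Bool)) →₀ ℕ) → ((V → Bool) →₀ ℕ) := Function.invFun π
  have hr : ∀ m, π (r (π m)) = π m := fun m => Function.invFun_eq ⟨m, rfl⟩
  let ψ : MvPolynomial (Sym2 (V × Bool) ⊕ (V × Bool)) ℂ →ₗ[ℂ] (MvPolynomial (V → Bool) ℂ ⧸ J) :=
    (basisMonomials _ ℂ).constr ℂ (fun k => Ideal.Quotient.mk J (monomial (r k) 1))
  have h : ψ ∘ₗ (phi G).toLinearMap = (Ideal.Quotient.mkₐ ℂ J).toLinearMap := by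
    apply (basisMonomials _ ℂ).ext
    intro m
    simp only [coe_basisMonomials, LinearMap.comp_apply, AlgHom.toLinearMap_apply, hπ]
    have : ψ (monomial (π m) 1) = Ideal.Quotient.mk J (monomial (r (π m)) 1) := by
      have := (basisMonomials _ ℂ).constr_basis ℂ (fun k => Ideal.Quotient.mk J (monomial (r k) (1:ℂ))) (π m)
      simpa only [coe_basisMonomials] using this
    rw [this, Ideal.Quotient.mkₐ_eq_mk, Ideal.Quotient.eq]
    obtain ⟨n, A, hA⟩ := exists_mon m
    obtain ⟨n', A', hA'⟩ := exists_mon (r (π m))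
    rw [hA, hA']
    apply hJ
    rw [← hA, ← hA', hπ, hπ, hr]
  intro f hf
  rw [mem_toric] at hf
  have := LinearMap.congr_fun h f
  simp [hf] at this
  exact Ideal.Quotient.eq_zero_iff_mem.1 this.symm

lemma mon_sub_mem_move (G : SimpleGraph V) {n : ℕ} (A : Fin n → V → Bool) (D : V → Prop)
    [DecidablePred D] (i i' : Fin n) (hi : i ≠ i')
    (hD : ∀ x y, D x → ¬ D y → G.Adj x y → A i y = A i' y) :
    mon A - mon (fun k x => if D x then A (Equiv.swap i i' k) x else A k x) ∈ low G := by
  classical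
  set A' : Fin n → V → Bool := fun k x => if D x then A (Equiv.swap i i' k) x else A k x with hA'
  have split : ∀ C : Fin n → V → Bool,
      mon C = X (C i) * X (C i') * ∏ k ∈ (univ.erase i).erase i', X (C k) := by
    intro C
    rw [mon, ← Finset.mul_prod_erase univ _ (mem_univ i),
      ← Finset.mul_prod_erase (univ.erase i) _ (by simp [hi.symm] : i' ∈ univ.erase i), mul_assoc]
  have hrest : ∏ k ∈ (univ.erase i).erase i', (X (A' k) : MvPolynomial (V → Bool) ℂ) =
      ∏ k ∈ (univ.erase i).erase i', X (A k) := by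
    refine Finset.prod_congr rfl fun k hk => ?_
    simp only [mem_erase, mem_univ, and_true] at hk
    congr 1
    funext x
    simp [hA', Equiv.swap_apply_of_ne_of_ne hk.2 hk.1]
  rw [split A, split A', hrest, ← sub_mul]
  apply Ideal.mul_mem_right
  apply Ideal.subset_span
  refine ⟨?_, ?_⟩
  · rw [mem_toric, map_sub, sub_eq_zero, ← mon_pair, ← mon_pair]
    apply phi_mon_congr
    · intro x y hxy
      have h1 := hD x y
      have h2 := hD y x
      have hyx := hxy.symm
      simp only [Fin.prod_univ_two, Matrix.cons_val_zero, Matrix.cons_val_one]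
      by_cases hx : D x <;> by_cases hy : D y
      · simp [hA', hx, hy, mul_comm]
      · simp [hA', hx, hy, h1 hx hy hxy, mul_comm]
      · simp [hA', hx, hy, h2 hy hx hyx, mul_comm]
      · simp [hA', hx, hy]
    · intro x
      simp only [Fin.prod_univ_two, Matrix.cons_val_zero, Matrix.cons_val_one]
      by_cases hx : D x
      · simp [hA', hx, mul_comm]
      · simp [hA', hx]
  · have hdeg : ∀ I I' : V → Bool,
        (X I * X I' : MvPolynomial (V → Bool) ℂ).totalDegree ≤ 2 := by
      intro I I'
      refine (totalDegree_mul _ _).trans ?_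
      simp [totalDegree_X]
    exact (totalDegree_sub _ _).trans (max_le (hdeg _ _) (hdeg _ _))

/-- Equality of images is preserved modulo the quadrics. -/
lemma phi_eq_of_mem (G : SimpleGraph V) {f g : MvPolynomial (V → Bool) ℂ} (h : f - g ∈ low G) :
    phi G f = phi G g := by
  have := mem_toric.1 (low_le G h)
  rwa [map_sub, sub_eq_zero] at this

/-- Making the column `v` agree. -/
lemma fix_column (G : SimpleGraph V) {n : ℕ} (B : Fin n → V → Bool) (S : Finset V) (v : V)
    (D : V → Prop) (hvD : D v) (hDS : ∀ x ∈ S, ¬ D x)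
    (key : (V → Bool) → Bool) (hkey : ∀ I J : V → Bool, (∀ x ∈ S, I x = J x) → key I = key J)
    (hcount : ∀ A : Fin n → V → Bool, phi G (mon A) = phi G (mon B) → ∀ c a,
      #{k | key (A k) = c ∧ A k v = a} = #{k | key (B k) = c ∧ B k v = a})
    (hcross : ∀ I J : V → Bool, key I = key J → ∀ x y, D x → ¬ D y → G.Adj x y → I y = J y) :
    ∀ (N : ℕ) (A : Fin n → V → Bool), #{k | A k v ≠ B k v} ≤ N →
      phi G (mon A) = phi G (mon B) → (∀ k, ∀ x ∈ S, A k x = B k x) →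
      ∃ A' : Fin n → V → Bool, mon A - mon A' ∈ low G ∧
        ∀ k, ∀ x ∈ insert v S, A' k x = B k x := by
  classical
  intro N
  induction N with
  | zero =>
    intro A hN hA hS
    refine ⟨A, by simp, ?_⟩
    intro k x hx
    rcases Finset.mem_insert.1 hx with rfl | hx
    · have := Finset.card_eq_zero.1 (Nat.le_zero.1 hN)
      by_contra hne
      have hk : k ∈ ({k | A k x ≠ B k x} : Finset (Fin n)) := by simpa using hne
      rw [this] at hk
      simp at hk
    · exact hS k x hx
  | succ N ih =>
    intro A hN hA hS
    by_cases hall : ∀ k, A k v = B k v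
    · refine ⟨A, by simp, ?_⟩
      intro k x hx
      rcases Finset.mem_insert.1 hx with rfl | hx
      · exact hall k
      · exact hS k x hx
    push Not at hall
    obtain ⟨i, hi⟩ := hall
    have hk : ∀ k, key (A k) = key (B k) := fun k => hkey _ _ (hS k)
    obtain ⟨i', h1, h2⟩ : ∃ i', (key (B i') = key (A i) ∧ B i' v = A i v) ∧
        ¬ (key (A i') = key (A i) ∧ A i' v = A i v) := by
      by_contra hcon
      push Not at hcon
      have hsub : ({k | key (B k) = key (A i) ∧ B k v = A i v} : Finset (Fin n)) ⊆
          ({k | key (A k) = key (A i) ∧ A k v = A i v} : Finset (Fin n)) := by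
        intro k hk
        simp only [mem_filter, mem_univ, true_and] at hk ⊢
        exact hcon k hk
      have heq := Finset.eq_of_subset_of_card_le hsub (hcount A hA _ _).le
      have hmem : i ∈ ({k | key (A k) = key (A i) ∧ A k v = A i v} : Finset (Fin n)) := by simp
      rw [← heq] at hmem
      simp only [mem_filter, mem_univ, true_and] at hmem
      exact hi hmem.2.symm
    have hkk : key (A i') = key (A i) := (hk i').trans h1.1
    have hv' : A i' v ≠ A i v := fun h => h2 ⟨hkk, h⟩
    have hii : i ≠ i' := by
      rintro rfl
      exact hv' rfl
    have hmove := mon_sub_mem_move G A D i i' hii (hcross _ _ hkk.symm)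
    set A' : Fin n → V → Bool := fun k x => if D x then A (Equiv.swap i i' k) x else A k x with hA'
    have hlt : #{k | A' k v ≠ B k v} < #{k | A k v ≠ B k v} := by
      apply Finset.card_lt_card
      rw [Finset.ssubset_iff_of_subset]
      · refine ⟨i, by simpa using hi, ?_⟩
        simp only [mem_filter, mem_univ, true_and, hA', if_pos hvD, Equiv.swap_apply_left]
        revert hi hv'
        cases A i v <;> cases A i' v <;> cases B i v <;> simp
      · intro k hk
        simp only [mem_filter, mem_univ, true_and, hA', if_pos hvD] at hk ⊢
        by_cases hki : k = i
        · subst hki; exact hi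
        by_cases hki' : k = i'
        · subst hki'
          rw [Equiv.swap_apply_right] at hk
          exact absurd h1.2.symm hk
        · rwa [Equiv.swap_apply_of_ne_of_ne hki hki'] at hk
    obtain ⟨A'', hA'', hfin⟩ := ih A' (by omega) ((phi_eq_of_mem G hmove).symm.trans hA) (by
      intro k x hx
      simp only [hA', if_neg (hDS x hx)]
      exact hS k x hx)
    refine ⟨A'', ?_, hfin⟩
    have := (low G).add_mem hmove hA''
    rwa [sub_add_sub_cancel] at this

/-- The graph of the edges inside `S`. -/
def inside (G : SimpleGraph V) (S : Finset V) : SimpleGraph V where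
  Adj a b := G.Adj a b ∧ a ∈ S ∧ b ∈ S
  symm := ⟨fun _ _ h => ⟨h.1.symm, h.2.2, h.2.1⟩⟩
  loopless := ⟨fun _ h => G.irrefl h.1⟩

lemma inside_mono (G : SimpleGraph V) {S T : Finset V} (h : S ⊆ T) : inside G S ≤ inside G T :=
  fun _ _ hab => ⟨hab.1, h hab.2.1, h hab.2.2⟩

lemma walk_closed (G : SimpleGraph V) (S : Finset V)
    (h : ∀ x y, x ∈ S → G.Adj x y → y ∈ S) {a b : V} (w : G.Walk a b) (ha : a ∈ S) : b ∈ S := by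
  induction w with
  | nil => exact ha
  | cons hadj _ ih => exact ih (h _ _ ha hadj)

lemma grow (G : SimpleGraph V) (hG : G.IsAcyclic) {n : ℕ} (A B : Fin n → V → Bool)
    (hAB : phi G (mon A) = phi G (mon B)) (k : ℕ) (hk : k ≤ Fintype.card V) :
    ∃ S : Finset V, #S = k ∧
      (∀ x ∈ S, ∀ y ∈ S, G.Reachable x y → (inside G S).Reachable x y) ∧
      ∃ A' : Fin n → V → Bool, mon A - mon A' ∈ low G ∧ ∀ k, ∀ x ∈ S, A' k x = B k x := by
  classical
  induction k with
  | zero => exact ⟨∅, by simp, by simp, A, by simp, by simp⟩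
  | succ k ih =>
    obtain ⟨S, hS, hconv, A', hA', hAS⟩ := ih (by omega)
    have hA'B : phi G (mon A') = phi G (mon B) := (phi_eq_of_mem G hA').symm.trans hAB
    by_cases hex : ∃ v w, v ∉ S ∧ w ∈ S ∧ G.Adj v w
    · obtain ⟨v, w, hv, hw, hvw⟩ := hex
      have hbr := (SimpleGraph.isAcyclic_iff_forall_adj_isBridge.1 hG) hvw
      rw [SimpleGraph.isBridge_iff] at hbr
      have hle : inside G S ≤ G.deleteEdges {s(v, w)} := by
        intro a b hab
        rw [SimpleGraph.deleteEdges_adj]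
        refine ⟨hab.1, ?_⟩
        have h2 := hab.2
        simp only [Set.mem_singleton_iff, Sym2.eq_iff]
        rintro (⟨rfl, rfl⟩ | ⟨rfl, rfl⟩)
        · exact hv h2.1
        · exact hv h2.2
      have hvdel : ∀ x ∈ S, ¬ (G.deleteEdges {s(v, w)}).Reachable v x := by
        intro x hx hr
        have h1 : G.Reachable w x := hvw.symm.reachable.trans (hr.mono (SimpleGraph.deleteEdges_le _))
        have h2 := (hconv w hw x hx h1).mono hle
        exact hbr (hr.trans h2.symm)
      obtain ⟨A'', h1, h2⟩ := fix_column G B S v (fun x => (G.deleteEdges {s(v, w)}).Reachable v x)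
        (SimpleGraph.Reachable.refl _) hvdel (fun I => I w) (fun I J h => h w hw)
        (by
          intro C hC c a
          obtain ⟨χ, hχ⟩ := eval_edge G hvw (fun p q => q = c ∧ p = a)
          exact count_of_eval G (fun I => I w = c ∧ I v = a) χ hχ C B hC)
        (by
          intro I J hIJ x y hx hy hxy
          by_cases he : s(x, y) = s(v, w)
          · rw [Sym2.eq_iff] at he
            rcases he with ⟨rfl, rfl⟩ | ⟨rfl, rfl⟩
            · exact hIJ
            · exact absurd (SimpleGraph.Reachable.refl _) hy
          · exact absurd (hx.trans (SimpleGraph.Adj.reachable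
              (SimpleGraph.deleteEdges_adj.2 ⟨hxy, he⟩))) hy)
        _ A' le_rfl hA'B hAS
      refine ⟨insert v S, by rw [Finset.card_insert_of_notMem hv, hS], ?_, A'', ?_, h2⟩
      · have hm := inside_mono G (Finset.subset_insert v S)
        have hvy : ∀ y ∈ S, G.Reachable v y → (inside G (insert v S)).Reachable v y := by
          intro y hy hr
          have hadj : (inside G (insert v S)).Adj v w :=
            ⟨hvw, Finset.mem_insert_self _ _, Finset.mem_insert_of_mem hw⟩
          exact hadj.reachable.trans
            ((hconv w hw y hy (hvw.symm.reachable.trans hr)).mono hm)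
        intro x hx y hy hr
        rcases Finset.mem_insert.1 hx with hxv | hx' <;>
          rcases Finset.mem_insert.1 hy with hyv | hy'
        · rw [hxv, hyv]
        · rw [hxv] at hr ⊢
          exact hvy y hy' hr
        · rw [hyv] at hr ⊢
          exact (hvy x hx' hr.symm).symm
        · exact (hconv x hx' y hy' hr).mono hm
      · have := (low G).add_mem hA' h1
        rwa [sub_add_sub_cancel] at this
    · push Not at hex
      have hclosed : ∀ x y, x ∈ S → G.Adj x y → y ∈ S := by
        intro x y hx hxy
        by_contra hy
        exact hex y x hy hx hxy.symm
      obtain ⟨v, hv⟩ : ∃ v, v ∉ S := by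
        by_contra hcon
        push Not at hcon
        have : S = univ := Finset.eq_univ_iff_forall.2 hcon
        rw [this, Finset.card_univ] at hS
        omega
      obtain ⟨A'', h1, h2⟩ := fix_column G B S v (fun x => x ∉ S) hv (fun x hx h => h hx)
        (fun I => false) (fun I J h => rfl)
        (by
          intro C hC c a
          obtain ⟨χ, hχ⟩ := eval_vertex G v (fun p => false = c ∧ p = a)
          exact count_of_eval G (fun I => false = c ∧ I v = a) χ hχ C B hC)
        (by
          intro I J hIJ x y hx hy hxy
          exact absurd (hclosed y x (by simpa using hy) hxy.symm) hx)
        _ A' le_rfl hA'B hAS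
      refine ⟨insert v S, by rw [Finset.card_insert_of_notMem hv, hS], ?_, A'', ?_, h2⟩
      · have hm := inside_mono G (Finset.subset_insert v S)
        have hno : ∀ y ∈ S, ¬ G.Reachable y v := by
          rintro y hy ⟨w⟩
          exact hv (walk_closed G S hclosed w hy)
        intro x hx y hy hr
        rcases Finset.mem_insert.1 hx with hxv | hx' <;>
          rcases Finset.mem_insert.1 hy with hyv | hy'
        · rw [hxv, hyv]
        · rw [hxv] at hr
          exact absurd hr.symm (hno y hy')
        · rw [hyv] at hr
          exact absurd hr (hno x hx')
        · exact (hconv x hx' y hy' hr).mono hm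
      · have := (low G).add_mem hA' h1
        rwa [sub_add_sub_cancel] at this

lemma card_eq (G : SimpleGraph V) (v : V) {n m : ℕ} (A : Fin n → V → Bool) (B : Fin m → V → Bool)
    (h : phi G (mon A) = phi G (mon B)) : n = m := by
  obtain ⟨χ, hχ⟩ := eval_vertex G v (fun _ => True)
  simpa using count_of_eval G (fun _ => True) χ hχ A B h

lemma gen_of_acyclic (G : SimpleGraph V) (hG : G.IsAcyclic) : toricIdeal G ≤ low G := by
  classical
  apply ker_le
  intro n m A B h
  rcases isEmpty_or_nonempty V with hV | ⟨⟨v⟩⟩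
  · have hX : ∀ I : V → Bool, (X I : MvPolynomial (V → Bool) ℂ) - 1 ∈ low G := by
      intro I
      apply Ideal.subset_span
      refine ⟨?_, ?_⟩
      · rw [mem_toric, map_sub, phi_X, map_one, sub_eq_zero]
        have he : G.edgeFinset = ∅ := by
          rw [Finset.eq_empty_iff_forall_notMem]
          intro e
          induction e using Sym2.ind with
          | _ x y => exact hV.elim x
        simp [Finset.univ_eq_empty, he]
      · refine (totalDegree_sub _ _).trans ?_
        simp [totalDegree_X]
    have hm : ∀ (k : ℕ) (C : Fin k → V → Bool), Ideal.Quotient.mk (low G) (mon C) = 1 := by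
      intro k C
      rw [mon, map_prod]
      apply Finset.prod_eq_one
      intro i _
      rw [← map_one (Ideal.Quotient.mk (low G)), Ideal.Quotient.eq]
      exact hX _
    rw [← Ideal.Quotient.eq, hm, hm]
  · obtain rfl := card_eq G v A B h
    obtain ⟨S, hS, -, A', hA', hAB⟩ := grow G hG A B h _ le_rfl
    have : S = univ := by rwa [← Finset.card_eq_iff_eq_univ]
    have : A' = B := by
      funext k x
      exact hAB k x (by simp [this])
    rwa [← this]

lemma walk_const (G : SimpleGraph V) (F Q : V → Prop)
    (h : ∀ x y, F x → F y → G.Adj x y → (Q x ↔ Q y)) {a b : V} (w : G.Walk a b)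
    (hw : ∀ y ∈ w.support, F y) : Q a ↔ Q b := by
  induction w with
  | nil => rfl
  | @cons a c b hadj w ih =>
    simp only [SimpleGraph.Walk.support_cons, List.mem_cons] at hw
    refine (h a c (hw a (Or.inl rfl)) (hw c (Or.inr ?_)) hadj).trans
      (ih fun y hy => hw y (Or.inr hy))
    exact w.start_mem_support

/-- If the set where two strings differ is connected, the product of their variables is alone
in its fibre. -/
lemma pair_unique (G : SimpleGraph V) (I I' J J' : V → Bool)
    (h : phi G (X I * X I') = phi G (X J * X J')) (r : V)
    (hr : ∀ x, I x ≠ I' x → ∃ w : G.Walk r x, ∀ y ∈ w.support, I y ≠ I' y) :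
    (J = I ∧ J' = I') ∨ (J = I' ∧ J' = I) := by
  rw [← mon_pair, ← mon_pair] at h
  have hv : ∀ x a, (if I x = a then 1 else 0) + (if I' x = a then 1 else 0) =
      (if J x = a then 1 else 0) + (if J' x = a then 1 else 0) := by
    intro x a
    obtain ⟨χ, hχ⟩ := eval_vertex G x (fun p => p = a)
    have hc := count_of_eval G (fun I => I x = a) χ hχ _ _ h
    simp only [Finset.card_filter, Fin.sum_univ_two, Matrix.cons_val_zero,
      Matrix.cons_val_one] at hc
    exact hc
  have he : ∀ x y, G.Adj x y → ∀ a b, (if I x = a ∧ I y = b then 1 else 0) +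
      (if I' x = a ∧ I' y = b then 1 else 0) =
      (if J x = a ∧ J y = b then 1 else 0) + (if J' x = a ∧ J' y = b then 1 else 0) := by
    intro x y hxy a b
    obtain ⟨χ, hχ⟩ := eval_edge G hxy (fun p q => p = a ∧ q = b)
    have hc := count_of_eval G (fun I => I x = a ∧ I y = b) χ hχ _ _ h
    simp only [Finset.card_filter, Fin.sum_univ_two, Matrix.cons_val_zero,
      Matrix.cons_val_one] at hc
    exact hc
  have hconst : ∀ x, I x ≠ I' x → (J r = I r ↔ J x = I x) := by
    intro x hx
    obtain ⟨w, hw⟩ := hr x hx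
    refine walk_const G (fun y => I y ≠ I' y) (fun y => J y = I y) ?_ w hw
    intro y z hy hz hyz
    have h1 := he y z hyz (I y) (I z)
    have h2 := hv y (I y)
    have h3 := hv z (I z)
    generalize I y = a1 at *
    generalize I z = a2 at *
    generalize I' y = a3 at *
    generalize I' z = a4 at *
    generalize J y = a5 at *
    generalize J z = a6 at *
    generalize J' y = a7 at *
    generalize J' z = a8 at *
    clear hw hr hv he h
    revert a1 a2 a3 a4 a5 a6 a7 a8
    decide
  by_cases hJ : J r = I r
  · left
    have hx : ∀ x, J x = I x ∧ J' x = I' x := by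
      intro x
      have h1 := hv x (I x)
      have h2 := hconst x
      simp only [hJ, true_iff] at h2
      generalize I x = a1 at *
      generalize I' x = a2 at *
      generalize J x = a3 at *
      generalize J' x = a4 at *
      clear hconst hr hv he h hJ
      revert a1 a2 a3 a4
      decide
    exact ⟨funext fun x => (hx x).1, funext fun x => (hx x).2⟩
  · right
    have hx : ∀ x, J x = I' x ∧ J' x = I x := by
      intro x
      have h1 := hv x (I x)
      have h2 := hconst x
      simp only [hJ, false_iff] at h2
      generalize I x = a1 at *
      generalize I' x = a2 at *
      generalize J x = a3 at *
      generalize J' x = a4 at *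
      clear hconst hr hv he h hJ
      revert a1 a2 a3 a4
      decide
    exact ⟨funext fun x => (hx x).1, funext fun x => (hx x).2⟩

/-- If all pairs from `R` are alone in their fibre, the quadrics lie in the ideal generated by
the variables outside `R`. -/
lemma low_le_span (G : SimpleGraph V) (v : V) (R : Set (V → Bool))
    (hR : ∀ I ∈ R, ∀ I' ∈ R, ∀ J J', phi G (X I * X I') = phi G (X J * X J') →
      (J = I ∧ J' = I') ∨ (J = I' ∧ J' = I)) :
    low G ≤ Ideal.span (Set.image X Rᶜ) := by
  classical
  unfold low
  rw [Ideal.span_le]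
  rintro g ⟨hg, hdeg⟩
  rw [SetLike.mem_coe, mem_ideal_span_X_image]
  intro m hm
  by_contra hcon
  push Not at hcon
  obtain ⟨n, A, hA⟩ := exists_sum m
  have hAR : ∀ i, A i ∈ R := by
    intro i
    by_contra hi
    have h0 := hcon (A i) hi
    rw [hA, Finsupp.finsetSum_apply, Finset.sum_eq_zero_iff] at h0
    simpa using h0 i (mem_univ _)
  have hn : n ≤ 2 := by
    have h1 := (le_totalDegree hm).trans hdeg
    have h2 : (m.sum fun _ e => e) = n := by
      have h3 : (m.sum fun _ e => e) = m.degree := rfl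
      rw [h3, hA, map_sum]
      simp
    omega
  have huniq : ∀ m', phi G (monomial m' 1) = phi G (monomial m 1) → m' = m := by
    intro m' hm'
    obtain ⟨n', B, hB⟩ := exists_sum m'
    rw [hA, hB, ← mon_eq, ← mon_eq] at hm'
    obtain rfl := card_eq G v _ _ hm'
    rw [hA, hB]
    interval_cases n'
    · simp
    · simp only [mon, Fin.prod_univ_succ, Fin.prod_univ_zero, mul_one] at hm'
      have h2 : phi G (X (A 0) * X (A 0)) = phi G (X (B 0) * X (A 0)) := by
        rw [map_mul, map_mul, hm']
      rcases hR _ (hAR 0) _ (hAR 0) _ _ h2 with h | h <;> simp [h.1]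
    · simp only [mon, Fin.prod_univ_two] at hm'
      rcases hR _ (hAR 0) _ (hAR 1) _ _ hm'.symm with h | h <;>
        simp [Fin.sum_univ_two, h.1, h.2, add_comm]
  choose π hπ using exists_pi G
  have hcoeff : coeff (π m) (phi G g) = coeff m g := by
    conv_lhs => rw [g.as_sum, map_sum, coeff_sum]
    rw [Finset.sum_eq_single m]
    · rw [← mul_one (coeff m g), ← smul_eq_mul, ← smul_monomial, map_smul, hπ, coeff_smul,
        coeff_monomial, if_pos rfl]
    · intro m' _ hne
      rw [← mul_one (coeff m' g), ← smul_eq_mul, ← smul_monomial, map_smul, hπ, coeff_smul,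
        coeff_monomial, if_neg, smul_zero]
      intro heq
      exact hne (huniq m' (by rw [hπ, hπ, heq]))
    · intro h
      exact absurd hm h
  rw [mem_toric.1 hg, coeff_zero] at hcoeff
  exact (mem_support_iff.1 hm) hcoeff.symm

/-- The index strings used for a cycle. -/
def row (u v : V) (P : V → Prop) [DecidablePred P] (e : Bool) (q : Bool × Bool) : V → Bool :=
  fun x => if x = u then q.1 else if x = v then q.2 else
    if P x then xor (xor q.1 q.2) e else false

lemma not_gen_of_cycle (G : SimpleGraph V) {u v : V} (huv : G.Adj u v) (p : G.Walk v u)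
    (hp : p.IsPath) (he : s(u, v) ∉ p.edges) : ¬ toricIdeal G ≤ low G := by
  classical
  intro hle
  let P : V → Prop := fun x => x ∈ p.support
  have hne : u ≠ v := huv.ne
  obtain ⟨z, hz, hzu, hzv⟩ : ∃ z, z ∈ p.support ∧ z ≠ u ∧ z ≠ v := by
    cases p with
    | nil => exact absurd rfl hne
    | @cons _ z _ h q =>
      refine ⟨z, by simp, ?_, h.ne'⟩
      rintro rfl
      simp [Sym2.eq_swap] at he
  have hconnv : ∀ x ∈ p.support, x ≠ u → ∃ w : G.Walk v x, ∀ y ∈ w.support,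
      y ∈ p.support ∧ y ≠ u := by
    intro x hx hxu
    refine ⟨p.takeUntil x hx, fun y hy => ⟨p.support_takeUntil_subset_support hx hy, ?_⟩⟩
    rintro rfl
    exact SimpleGraph.Walk.endpoint_notMem_support_takeUntil hp hx hxu.symm hy
  have hconnu : ∀ x ∈ p.support, x ≠ v → ∃ w : G.Walk u x, ∀ y ∈ w.support,
      y ∈ p.support ∧ y ≠ v := by
    intro x hx hxv
    have hx' : x ∈ p.reverse.support := by simpa using hx
    refine ⟨p.reverse.takeUntil x hx', fun y hy =>
      ⟨by simpa using p.reverse.support_takeUntil_subset_support hx' hy, ?_⟩⟩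
    rintro rfl
    exact SimpleGraph.Walk.endpoint_notMem_support_takeUntil hp.reverse hx' hxv.symm hy
  have hus : u ∈ p.support := p.end_mem_support
  have hvs : v ∈ p.support := p.start_mem_support
  have hlow := low_le_span G u (Set.range (row u v P false)) (by
    rintro _ ⟨⟨a, b⟩, rfl⟩ _ ⟨⟨a', b'⟩, rfl⟩ J J' hJ
    by_cases ha : a = a'
    · subst ha
      refine pair_unique G _ _ J J' hJ v ?_
      intro x hx
      by_cases hb : b = b'
      · subst hb
        exact absurd rfl hx
      have hx1 : x ≠ u := by
        rintro rfl
        simp [row] at hx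
      have hx2 : x ∈ p.support := by
        by_contra hxp
        have : x ≠ v := fun h => hxp (h ▸ hvs)
        simp [row, hx1, this, P, hxp] at hx
      obtain ⟨w, hw⟩ := hconnv x hx2 hx1
      refine ⟨w, fun y hy => ?_⟩
      obtain ⟨h1, h2⟩ := hw y hy
      by_cases hyv : y = v <;> simp [row, h2, hyv, P, h1, hb, hne.symm]
    · by_cases hb : b = b'
      · subst hb
        refine pair_unique G _ _ J J' hJ u ?_
        intro x hx
        have hx1 : x ≠ v := by
          rintro rfl
          simp [row, hne.symm] at hx
        have hx2 : x ∈ p.support := by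
          by_contra hxp
          have : x ≠ u := fun h => hxp (h ▸ hus)
          simp [row, hx1, this, P, hxp] at hx
        obtain ⟨w, hw⟩ := hconnu x hx2 hx1
        refine ⟨w, fun y hy => ?_⟩
        obtain ⟨h1, h2⟩ := hw y hy
        by_cases hyu : y = u <;> simp [row, h2, hyu, P, h1, ha]
      · refine pair_unique G _ _ J J' hJ u ?_
        intro x hx
        have hxor : xor a b = xor a' b' := by
          revert ha hb
          cases a <;> cases b <;> cases a' <;> cases b' <;> simp
        by_cases hxu : x = u
        · subst hxu
          refine ⟨SimpleGraph.Walk.nil, ?_⟩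
          intro y hy
          simp only [SimpleGraph.Walk.support_nil, List.mem_singleton] at hy
          subst hy
          exact hx
        by_cases hxv : x = v
        · subst hxv
          refine ⟨SimpleGraph.Walk.cons huv SimpleGraph.Walk.nil, ?_⟩
          intro y hy
          simp only [SimpleGraph.Walk.support_cons, SimpleGraph.Walk.support_nil,
            List.mem_cons, List.not_mem_nil, or_false] at hy
          rcases hy with rfl | rfl
          · simp [row, ha]
          · exact hx
        · simp [row, hxu, hxv, hxor] at hx)
  have hmem : mon (row u v P false) - mon (row u v P true) ∈ toricIdeal G := by
    rw [mem_toric, map_sub, sub_eq_zero]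
    apply phi_mon_congr
    · intro x y hxy
      simp only [Fintype.prod_prod_type, Fintype.prod_bool, row]
      split_ifs <;> simp <;> ring
    · intro x
      simp only [Fintype.prod_prod_type, Fintype.prod_bool, row]
      split_ifs <;> simp <;> ring
  have hB : mon (row u v P true) ∈ Ideal.span (Set.image X (Set.range (row u v P false))ᶜ) := by
    rw [mon, ← Finset.mul_prod_erase univ _ (mem_univ (false, false))]
    apply Ideal.mul_mem_right
    apply Ideal.subset_span
    refine ⟨_, ?_, rfl⟩
    rintro ⟨⟨a, b⟩, h⟩
    have h1 := congrFun h u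
    have h2 := congrFun h v
    have h3 := congrFun h z
    simp [row, hne.symm, hzu, hzv, P, hz] at h1 h2 h3
    simp [h1, h2] at h3
  have hA := (Ideal.add_mem _ (hlow (hle hmem)) hB)
  rw [sub_add_cancel, mon_eq, mem_ideal_span_X_image] at hA
  obtain ⟨I, hI, hI0⟩ := hA (∑ q, Finsupp.single (row u v P false q) 1)
    (by rw [mem_support_iff, coeff_monomial, if_pos rfl]; exact one_ne_zero)
  apply hI0
  rw [Finsupp.finsetSum_apply, Finset.sum_eq_zero_iff]
  intro q _
  rw [Finsupp.single_apply, if_neg]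
  rintro rfl
  exact hI ⟨q, rfl⟩

end BinaryGraphModels

namespace BinaryGraphModels

/-- the toric ideal `I_G` is generated in degree `≤ 2` iff `G` is a forest. -/
theorem genInDegLE_two_iff_isAcyclic {V : Type} [Fintype V] [DecidableEq V]
    (G : SimpleGraph V) :
    GenInDegLE G 2 ↔ G.IsAcyclic := by
  constructor
  · intro h u c hc
    cases c with
    | nil => exact SimpleGraph.Walk.not_isCycle_nil hc
    | cons hadj p =>
      rw [SimpleGraph.Walk.cons_isCycle_iff] at hc
      exact not_gen_of_cycle G hadj p hc.1 hc.2 (le_of_eq h)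
  · intro h
    exact le_antisymm (gen_of_acyclic G h) (low_le G)

end BinaryGraphModels
end

section
/- For every m ≥ 3, the toric ideal I_{K_m} of the complete graph K_m on m vertices is not generated in degree ≤ 2m − 3; that is, the Markov width satisfies μ(K_m) ≥ 2m − 2. -/
open MvPolynomial Finset

namespace BinaryGraphModels

/-- two-way marginal -/
def marg {m : ℕ} (z : (Fin m → Bool) → ℕ) (j k : Fin m) (a c : Bool) : ℕ :=
  ∑ I : Fin m → Bool, if I j = a ∧ I k = c then z I else 0

/-- the string which is `!b` at `i` and `b` elsewhere -/
def estr {m : ℕ} (b : Bool) (i : Fin m) : Fin m → Bool := fun k => if k = i then !b else b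

/-- the two tables in the fiber -/
def utab {m : ℕ} (b : Bool) (I : Fin m → Bool) : ℕ :=
  (∑ i : Fin m, if I = estr b i then 1 else 0) + if I = (fun _ => !b) then m - 2 else 0

/-- good fiber -/
def Good {m : ℕ} (z : (Fin m → Bool) → ℕ) : Prop :=
  ∀ j k : Fin m, j ≠ k → ∀ a c, marg z j k a c = if a = c then m - 2 else 1

def Pat {m : ℕ} (z : (Fin m → Bool) → ℕ) (a : Bool) (i k l : Fin m) : Prop :=
  ∃ I, z I ≠ 0 ∧ I i = a ∧ I k = !a ∧ I l = !a

lemma marg_utab {m : ℕ} (b : Bool) (j k : Fin m) (a c : Bool) :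
    marg (utab b) j k a c =
      (∑ i : Fin m, if estr b i j = a ∧ estr b i k = c then 1 else 0) +
        if (!b) = a ∧ (!b) = c then m - 2 else 0 := by
  have h1 : ∀ I : Fin m → Bool, (if I j = a ∧ I k = c then utab b I else 0) =
      (∑ i : Fin m, if I = estr b i then (if estr b i j = a ∧ estr b i k = c then 1 else 0) else 0)
      + if I = (fun _ => !b) then (if (!b) = a ∧ (!b) = c then m - 2 else 0) else 0 := by
    intro I
    unfold utab
    by_cases h : I j = a ∧ I k = c
    · rw [if_pos h]
      congr 1
      · apply Finset.sum_congr rfl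
        intro i _
        by_cases hi : I = estr b i
        · subst hi; simp [h]
        · simp [hi]
      · by_cases hi : I = (fun _ => !b)
        · subst hi; simp only [if_true]; rw [if_pos h]
        · simp [hi]
    · rw [if_neg h]
      symm
      rw [Nat.add_eq_zero_iff]
      constructor
      · apply Finset.sum_eq_zero
        intro i _
        by_cases hi : I = estr b i
        · subst hi; simp [h]
        · simp [hi]
      · by_cases hi : I = (fun _ => !b)
        · subst hi; simp only [if_true]; rw [if_neg h]
        · simp [hi]
  unfold marg
  rw [Finset.sum_congr rfl (fun I _ => h1 I), Finset.sum_add_distrib, Finset.sum_comm]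
  simp

lemma good_utab {m : ℕ} (b : Bool) : Good (utab (m := m) b) := by
  intro j k hjk a c
  rw [marg_utab]
  by_cases hac : a = c
  · subst hac
    by_cases hab : a = b
    · subst hab
      have : ∀ i : Fin m, (estr a i j = a ∧ estr a i k = a) ↔ i ∉ ({j, k} : Finset (Fin m)) := by
        intro i; simp only [estr, Finset.mem_insert, Finset.mem_singleton]; cases a <;> grind
      simp only [this]
      have h2 : (Finset.univ.filter (fun i : Fin m => i ∉ ({j, k} : Finset (Fin m)))).card = m - 2 := by
        rw [Finset.filter_not, Finset.filter_mem_eq_inter, Finset.univ_inter,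
          Finset.card_sdiff_of_subset (Finset.subset_univ _), Finset.card_pair hjk]
        simp
      rw [← Finset.card_filter, h2]; simp
    · have hab' : a = !b := by cases a <;> cases b <;> simp_all
      subst hab'
      have : ∀ i : Fin m, ¬ (estr b i j = !b ∧ estr b i k = !b) := by
        intro i; simp only [estr]; cases b <;> grind
      simp [this]
  · have hne : ¬ ((!b) = a ∧ (!b) = c) := by rintro ⟨h1, h2⟩; exact hac (h1.symm.trans h2)
    rw [if_neg hne, if_neg hac]
    have : ∀ i : Fin m, (estr b i j = a ∧ estr b i k = c) ↔ i = if a = b then k else j := by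
      intro i; simp only [estr]; cases a <;> cases b <;> cases c <;> grind
    simp [this]

lemma sum_eq_marg {m : ℕ} (z : (Fin m → Bool) → ℕ) (j k : Fin m) :
    ∑ I, z I = marg z j k true true + marg z j k true false + marg z j k false true
      + marg z j k false false := by
  unfold marg
  simp only [← Finset.sum_add_distrib]
  apply Finset.sum_congr rfl
  intro I _
  cases I j <;> cases I k <;> simp

section
variable {m : ℕ} {z : (Fin m → Bool) → ℕ}

lemma Good.exi (hz : Good z) {j k : Fin m} (h : j ≠ k) (a : Bool) :
    ∃ I, z I ≠ 0 ∧ I j = a ∧ I k = !a := by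
  have h1 := hz j k h a (!a)
  by_contra! hc
  have : marg z j k a (!a) = 0 := by
    apply Finset.sum_eq_zero
    intro I _
    split_ifs with hI
    · by_contra h0; exact hc I h0 hI.1 hI.2
    · rfl
  simp [this] at h1

lemma Good.uniq (hz : Good z) {j k : Fin m} (h : j ≠ k) (a : Bool) {I J : Fin m → Bool}
    (hI : z I ≠ 0) (hJ : z J ≠ 0) (h1 : I j = a) (h2 : I k = !a) (h3 : J j = a) (h4 : J k = !a) :
    I = J := by
  by_contra hne
  have hm := hz j k h a (!a)
  have hle : ∑ K ∈ ({I, J} : Finset (Fin m → Bool)), (if K j = a ∧ K k = !a then z K else 0)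
      ≤ marg z j k a (!a) :=
    Finset.sum_le_sum_of_subset (Finset.subset_univ _)
  rw [Finset.sum_pair hne, hm, if_pos ⟨h1, h2⟩, if_pos ⟨h3, h4⟩] at hle
  simp at hle
  omega

lemma Pat.swap {a : Bool} {i k l : Fin m} (h : Pat z a i k l) : Pat z a i l k := by
  obtain ⟨I, h0, h1, h2, h3⟩ := h
  exact ⟨I, h0, h1, h3, h2⟩

lemma Pat.swap' (hz : Good z) {a : Bool} {i k l : Fin m} (hil : i ≠ l) (hkl : k ≠ l)
    (h : Pat z a i k l) : Pat z a k i l := by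
  by_contra hc
  obtain ⟨I, h0, h1, h2, h3⟩ := h
  have e1 := hz i l hil (!a) (!a)
  have e2 := hz k l hkl (!a) (!a)
  have hlt : marg z i l (!a) (!a) < marg z k l (!a) (!a) := by
    apply Finset.sum_lt_sum
    · intro J _
      split_ifs with hJ hJ'
      · rfl
      · have : z J = 0 := by
          by_contra hJ0
          exact hc ⟨J, hJ0, by cases a <;> simp_all, hJ.1, hJ.2⟩
        omega
      · omega
      · rfl
    · refine ⟨I, Finset.mem_univ _, ?_⟩
      have : ¬ (I i = !a ∧ I l = !a) := by grind
      rw [if_neg this, if_pos ⟨h2, h3⟩]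
      omega
  omega

lemma Pat.excl (hz : Good z) {a : Bool} {i k l : Fin m} (hil : i ≠ l) (hkl : k ≠ l) (hik : i ≠ k)
    (h : Pat z a i k l) : ¬ Pat z (!a) i k l := by
  intro h'
  have h2 : Pat z (!a) l i k := (h'.swap.swap' hz hik hkl.symm)
  obtain ⟨I, h0, h1, h2', h3⟩ := h
  obtain ⟨J, g0, g1, g2, g3⟩ := h2
  have := hz.uniq hil a h0 g0 h1 h3 (by simpa using g2) g1
  subst this
  simp_all

lemma Good.exh (hz : Good z) (a : Bool) {i k l : Fin m} (hil : i ≠ l) (hkl : k ≠ l) (hik : i ≠ k) :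
    Pat z a i k l ∨ Pat z (!a) i k l := by
  obtain ⟨I, h0, h1, h2⟩ := hz.exi hik a
  by_cases h : I l = !a
  · exact Or.inl ⟨I, h0, h1, h2, h⟩
  · exact Or.inr (Pat.swap' hz hkl hil ⟨I, h0, h2, by simpa using h1, by simpa using h⟩)

lemma Pat.ext (hz : Good z) {a : Bool} {i k l x : Fin m} (hil : i ≠ l) (hkl : k ≠ l) (hik : i ≠ k)
    (hix : i ≠ x) (hkx : k ≠ x) (h : Pat z a i k l) : Pat z a i k x := by
  rcases hz.exh a hix hkx hik with hg | hg
  · exact hg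
  exfalso
  have hlx : l ≠ x := by
    rintro rfl
    exact h.excl hz hil hkl hik hg
  have h' := h.swap' hz hil hkl
  have hg' := hg.swap' hz hix hkx
  obtain ⟨I, h0, h1, h2, h3⟩ := h
  obtain ⟨J, j0, j1, j2, j3⟩ := h'
  obtain ⟨K, k0, k1, k2, k3⟩ := hg'
  obtain ⟨L, l0, l1, l2, l3⟩ := hg
  have e1 : I = K := hz.uniq hik a h0 k0 h1 h2 (by simpa using k2) k1
  have e2 : J = L := hz.uniq hik.symm a j0 l0 j1 j2 (by simpa using l2) l1
  subst e1 e2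
  have e3 : I = J := hz.uniq hlx (!a) h0 j0 h3 k3 j3 l3
  subst e3
  simp_all

lemma Good.allPat (hz : Good z) (hm : 3 ≤ m) : ∃ a, ∀ i k l : Fin m, i ≠ l → k ≠ l → i ≠ k →
    Pat z a i k l := by
  have key : ∀ (a : Bool) (i k l : Fin m), i ≠ l → k ≠ l → i ≠ k → Pat z a i k l →
      ∀ i k l : Fin m, i ≠ l → k ≠ l → i ≠ k → Pat z a i k l := by
    intro a i k l hil hkl hik h
    have hQ : ∀ i k : Fin m, i ≠ k → (∀ x, i ≠ x → k ≠ x → Pat z a i k x) →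
        ∀ k', i ≠ k' → ∀ x, i ≠ x → k' ≠ x → Pat z a i k' x := by
      intro i k hik hq k' hik' x hix hkx
      by_cases hkk : k = k'
      · subst hkk; exact hq x hix hkx
      · exact (hq k' hik' hkk).swap.ext hz hik (Ne.symm hkk) hik' hix hkx
    have q1 : ∀ x, i ≠ x → k ≠ x → Pat z a i k x := fun x h1 h2 => h.ext hz hil hkl hik h1 h2
    have q2 := hQ i k hik q1
    intro i' k' l' h1 h2 h3
    by_cases hii : i = i'
    · subst hii; exact q2 k' h3 l' h1 h2
    · exact hQ i' i (Ne.symm hii) (fun x hx1 hx2 => (q2 i' hii x hx2 hx1).swap' hz hx2 hx1)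
        k' h3 l' h1 h2
  let i : Fin m := ⟨0, by omega⟩
  let k : Fin m := ⟨1, by omega⟩
  let l : Fin m := ⟨2, by omega⟩
  have hil : i ≠ l := by simp [i, l]
  have hkl : k ≠ l := by simp [k, l]
  have hik : i ≠ k := by simp [i, k]
  rcases hz.exh true hil hkl hik with h | h
  · exact ⟨true, key _ i k l hil hkl hik h⟩
  · exact ⟨_, key _ i k l hil hkl hik h⟩

lemma Good.eq_utab (hz : Good z) (hm : 3 ≤ m) : ∃ b, z = utab b := by
  obtain ⟨a, ha⟩ := hz.allPat hm
  have hn : ∀ i k l : Fin m, i ≠ l → k ≠ l → i ≠ k → ¬ Pat z (!a) i k l :=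
    fun i k l h1 h2 h3 => (ha i k l h1 h2 h3).excl hz h1 h2 h3
  have hex : ∀ i : Fin m, ∃ k, i ≠ k := by
    intro i
    by_cases h : i = ⟨0, by omega⟩
    · exact ⟨⟨1, by omega⟩, by simp [h]⟩
    · exact ⟨_, h⟩
  refine ⟨!a, ?_⟩
  have h1 : ∀ i, 1 ≤ z (estr (!a) i) := by
    intro i
    obtain ⟨k, hik⟩ := hex i
    obtain ⟨I, h0, h1, h2⟩ := hz.exi hik a
    have : I = estr (!a) i := by
      funext l
      by_cases hl : l = i
      · simp [estr, hl, h1]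
      · by_cases hlk : l = k
        · simp [estr, hl, ← hlk] at *; grind
        · by_contra hne
          simp [estr, hl] at hne
          exact hn k i l (Ne.symm hlk) (Ne.symm hl) hik.symm
            ⟨I, h0, h2, by simpa using h1, by simpa using hne⟩
    rw [← this]; omega
  have h2 : z (fun _ => a) = m - 2 := by
    let i : Fin m := ⟨0, by omega⟩
    obtain ⟨k, hik⟩ := hex i
    have := hz i k hik a a
    rw [if_pos rfl] at this
    rw [← this]
    unfold marg
    rw [Finset.sum_eq_single (fun _ => a)]
    · simp
    · intro I _ hI
      split_ifs with hIk
      · by_contra h0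
        apply hI
        funext l
        by_contra hl
        have hli : l ≠ i := by rintro rfl; exact hl hIk.1
        have hlk : l ≠ k := by rintro rfl; exact hl hIk.2
        exact hn l i k hlk hik hli ⟨I, h0, by cases a <;> simp_all, by simpa using hIk.1, by simpa using hIk.2⟩
      · rfl
    · simp
  have hle : ∀ I, utab (!a) I ≤ z I := by
    intro I
    by_cases hc : I = fun _ => a
    · subst hc
      rw [h2]
      have : ∀ i : Fin m, ¬ ((fun _ => a) = estr (!a) i) := by
        intro i h
        obtain ⟨k, hik⟩ := hex i
        have := congrFun h k
        simp [estr, hik.symm] at this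
      simp [utab, this]
    · have hc' : ¬ (I = fun _ => !!a) := by simpa using hc
      unfold utab
      rw [if_neg hc', add_zero]
      by_cases he : ∃ i, I = estr (!a) i
      · obtain ⟨i, rfl⟩ := he
        refine le_trans ?_ (h1 i)
        rw [← Finset.card_filter, Finset.card_le_one]
        have hinj : ∀ j, estr (!a) i = estr (!a) j → j = i := by
          intro j h
          have := congrFun h i
          by_contra hne
          simp [estr, Ne.symm hne] at this
        intro x hx y hy
        simp only [Finset.mem_filter, Finset.mem_univ, true_and] at hx hy
        rw [hinj x hx, hinj y hy]
      · push Not at he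
        simp [he]
  have hsum : ∑ I, utab (m := m) (!a) I = ∑ I, z I := by
    let i : Fin m := ⟨0, by omega⟩
    obtain ⟨k, hik⟩ := hex i
    rw [sum_eq_marg _ i k, sum_eq_marg _ i k]
    simp only [hz i k hik, good_utab (!a) i k hik]
  have := (Finset.sum_eq_sum_iff_of_le (fun I _ => hle I)).1 hsum
  funext I
  exact (this I (Finset.mem_univ _)).symm

lemma sum_utab (hm : 3 ≤ m) (b : Bool) : ∑ I, utab (m := m) b I = 2 * m - 2 := by
  have hne : (⟨0, by omega⟩ : Fin m) ≠ ⟨1, by omega⟩ := by simp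
  rw [sum_eq_marg _ ⟨0, by omega⟩ ⟨1, by omega⟩]
  simp only [good_utab b _ _ hne]
  simp
  omega

lemma utab_ne {b : Bool} {I : Fin m → Bool} (h : utab b I ≠ 0) :
    (∃ i, I = estr b i) ∨ I = fun _ => !b := by
  by_contra! hc
  apply h
  simp [utab, hc.1, hc.2]

lemma utab_disj (hm : 3 ≤ m) (I : Fin m → Bool) : utab true I = 0 ∨ utab false I = 0 := by
  by_contra! hc
  have h3 : ∀ i j : Fin m, ∃ k, k ≠ i ∧ k ≠ j := by
    intro i j
    have : ∃ k, k ∉ ({i, j} : Finset (Fin m)) := by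
      by_contra! h
      have h1 : (Finset.univ : Finset (Fin m)) ⊆ {i, j} := fun k _ => h k
      have h2 := Finset.card_le_card h1
      have h4 := Finset.card_le_two (a := i) (b := j)
      simp at h2
      omega
    simpa using this
  rcases utab_ne hc.1 with ⟨i, hi⟩ | hi <;> rcases utab_ne hc.2 with ⟨j, hj⟩ | hj
  · obtain ⟨k, h1, h2⟩ := h3 i j
    have e1 := congrFun hi k
    have e2 := congrFun hj k
    simp [estr, h1, h2] at e1 e2
    simp_all
  · obtain ⟨k, h1, h2⟩ := h3 i i
    have e1 := congrFun hi i
    have e2 := congrFun hj i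
    simp [estr] at e1 e2
    simp_all
  · obtain ⟨k, h1, h2⟩ := h3 j j
    have e1 := congrFun hi j
    have e2 := congrFun hj j
    simp [estr] at e1 e2
    simp_all
  · have e1 := congrFun hi ⟨0, by omega⟩
    have e2 := congrFun hj ⟨0, by omega⟩
    simp_all

end

/-- exponent of the image of `p_I` -/
noncomputable def expo {m : ℕ} (I : Fin m → Bool) : (Sym2 (Fin m × Bool) ⊕ (Fin m × Bool)) →₀ ℕ :=
  ∑ e ∈ (⊤ : SimpleGraph (Fin m)).edgeFinset,
    Finsupp.single (Sum.inl (Sym2.map (fun v => (v, I v)) e)) 1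

noncomputable def expA {m : ℕ} (w : (Fin m → Bool) →₀ ℕ) :
    (Sym2 (Fin m × Bool) ⊕ (Fin m × Bool)) →₀ ℕ := ∑ I, w I • expo I

lemma expA_add {m : ℕ} (w s : (Fin m → Bool) →₀ ℕ) : expA (w + s) = expA w + expA s := by
  simp [expA, add_smul, Finset.sum_add_distrib]

lemma phi_X_s3 {m : ℕ} (hm : 3 ≤ m) (I : Fin m → Bool) :
    phi (⊤ : SimpleGraph (Fin m)) (X I) = monomial (expo I) 1 := by
  unfold phi expo
  rw [aeval_X]
  have : ∀ l : Fin m, ¬ ∀ k, ¬ (⊤ : SimpleGraph (Fin m)).Adj l k := by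
    intro l h
    have h0 := h ⟨0, by omega⟩
    have h1 := h ⟨1, by omega⟩
    simp at h0 h1
    rw [h0] at h1
    simp at h1
  rw [monomial_sum_one]
  refine Eq.trans ?_ (mul_one _)
  congr 1
  · simp only [X]
    congr!
  · apply Finset.prod_eq_one
    intro l hl
    exact absurd (by simpa only [Finset.mem_filter, Finset.mem_univ, true_and] using hl) (this l)

lemma phi_monomial {m : ℕ} (hm : 3 ≤ m) (w : (Fin m → Bool) →₀ ℕ) (c : ℂ) :
    phi (⊤ : SimpleGraph (Fin m)) (monomial w c) = monomial (expA w) c := by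
  rw [monomial_eq, Finsupp.prod_fintype _ _ (by simp), map_mul, map_prod]
  simp only [map_pow, phi_X_s3 hm, monomial_pow, one_pow]
  rw [← monomial_sum_one, algHom_C, algebraMap_eq, C_mul_monomial, mul_one]
  rfl

lemma expo_inr {m : ℕ} (I : Fin m → Bool) (q) : expo I (Sum.inr q) = 0 := by
  simp [expo, Finsupp.finsetSum_apply]

lemma expo_inl {m : ℕ} (I : Fin m → Bool) (j k : Fin m) (a c : Bool) :
    expo I (Sum.inl s((j, a), (k, c))) = if j ≠ k ∧ I j = a ∧ I k = c then 1 else 0 := by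
  have hinj : ∀ e : Sym2 (Fin m), Sym2.map (fun v => (v, I v)) e = s((j, a), (k, c)) ↔
      (e = s(j, k) ∧ I j = a ∧ I k = c) := by
    intro e
    induction e using Sym2.ind with
    | _ x y =>
      simp only [Sym2.map_mk, Sym2.eq_iff, Prod.mk.injEq]
      grind
  simp only [expo, Finsupp.finsetSum_apply, Finsupp.single_apply, Sum.inl.injEq, hinj]
  by_cases h : I j = a ∧ I k = c
  · simp [h]
  · simp only [h, and_false, if_false, Finset.sum_const_zero]

lemma expA_inl {m : ℕ} (w : (Fin m → Bool) →₀ ℕ) (j k : Fin m) (a c : Bool) :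
    expA w (Sum.inl s((j, a), (k, c))) = if j ≠ k then marg w j k a c else 0 := by
  simp only [expA, Finsupp.finsetSum_apply, Finsupp.smul_apply, expo_inl, marg]
  by_cases h : j = k <;> simp [h]

lemma expA_eq_of_good {m : ℕ} {w s : (Fin m → Bool) →₀ ℕ} (hw : Good w) (hs : Good s) :
    expA w = expA s := by
  ext q
  rcases q with q | q
  · induction q using Sym2.ind with
    | _ x y =>
      obtain ⟨j, a⟩ := x
      obtain ⟨k, c⟩ := y
      rw [expA_inl, expA_inl]
      by_cases h : j ≠ k
      · rw [if_pos h, if_pos h, hw j k h, hs j k h]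
      · rw [if_neg h, if_neg h]
  · simp [expA, Finsupp.finsetSum_apply, expo_inr]

lemma good_of_expA_eq {m : ℕ} {w s : (Fin m → Bool) →₀ ℕ} (hw : Good w) (h : expA s = expA w) :
    Good s := by
  intro j k hjk a c
  have := DFunLike.congr_fun h (Sum.inl s((j, a), (k, c)))
  rw [expA_inl, expA_inl, if_pos hjk, if_pos hjk, hw j k hjk] at this
  exact this

/-- the tables as finitely supported functions -/
noncomputable def ufin {m : ℕ} (b : Bool) : (Fin m → Bool) →₀ ℕ :=
  Finsupp.equivFunOnFinite.symm (utab b)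

lemma ufin_coe {m : ℕ} (b : Bool) : (ufin (m := m) b : (Fin m → Bool) → ℕ) = utab b := rfl

lemma exists_other {m : ℕ} (hm : 3 ≤ m) {f : MvPolynomial (Fin m → Bool) ℂ}
    (hf : f ∈ toricIdeal (⊤ : SimpleGraph (Fin m))) {w : (Fin m → Bool) →₀ ℕ}
    (hw : coeff w f ≠ 0) : ∃ w', w' ≠ w ∧ expA w' = expA w := by
  by_contra! hc
  have h0 : phi (⊤ : SimpleGraph (Fin m)) f = 0 := hf
  rw [f.as_sum, map_sum] at h0
  have h1 := congrArg (coeff (expA w)) h0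
  rw [coeff_sum] at h1
  simp only [phi_monomial hm, coeff_monomial, coeff_zero] at h1
  rw [Finset.sum_eq_single w] at h1
  · simp at h1; exact hw h1
  · intro w' _ hne
    rw [if_neg (hc w' hne)]
  · intro h; simpa using h

lemma coeff_low {m : ℕ} (hm : 3 ≤ m) {f : MvPolynomial (Fin m → Bool) ℂ}
    (hf : f ∈ toricIdeal (⊤ : SimpleGraph (Fin m))) (hd : f.totalDegree ≤ 2 * m - 3)
    {s w : (Fin m → Bool) →₀ ℕ} (hsw : s + w = ufin false) : coeff w f = 0 := by
  by_contra hw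
  obtain ⟨w', hne, hA⟩ := exists_other hm hf hw
  have hA' : expA (s + w') = expA (ufin (m := m) false) := by
    rw [← hsw, expA_add, expA_add, hA]
  have hg : Good (s + w' : (Fin m → Bool) →₀ ℕ) := good_of_expA_eq (good_utab false) hA'
  obtain ⟨b, hb⟩ := hg.eq_utab hm
  cases b with
  | false =>
    apply hne
    have : s + w' = s + w := by
      rw [hsw]; exact DFunLike.coe_injective hb
    exact add_left_cancel this
  | true =>
    have hs : s = 0 := by
      ext I
      have e1 := congrFun hb I
      have e2 := DFunLike.congr_fun hsw I
      rw [ufin_coe] at e2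
      simp only [Finsupp.add_apply] at e1 e2
      rcases utab_disj hm I with h | h
      · simp only [Finsupp.zero_apply]; omega
      · simp only [Finsupp.zero_apply]; omega
    rw [hs, zero_add] at hsw
    have hle := le_totalDegree (mem_support_iff.2 hw)
    rw [hsw, Finsupp.sum_fintype _ _ (by simp), ufin_coe, sum_utab hm] at hle
    omega

lemma not_gen (m : ℕ) (hm : 3 ≤ m) :
    ¬ GenInDegLE (⊤ : SimpleGraph (Fin m)) (2 * m - 3) := by
  intro h
  have hmem : (monomial (ufin false) 1 - monomial (ufin true) 1 : MvPolynomial (Fin m → Bool) ℂ)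
      ∈ toricIdeal (⊤ : SimpleGraph (Fin m)) := by
    change phi (⊤ : SimpleGraph (Fin m)) _ = 0
    rw [map_sub, phi_monomial hm, phi_monomial hm,
      expA_eq_of_good (w := ufin false) (s := ufin true) (good_utab false) (good_utab true), sub_self]
  have hall : ∀ g ∈ Ideal.span {f : MvPolynomial (Fin m → Bool) ℂ |
      f ∈ toricIdeal (⊤ : SimpleGraph (Fin m)) ∧ f.totalDegree ≤ 2 * m - 3},
      ∀ a, coeff (ufin false) (a * g) = 0 := by
    intro g hg
    induction hg using Submodule.span_induction with
    | mem f hf =>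
      intro a
      rw [coeff_mul]
      apply Finset.sum_eq_zero
      rintro ⟨s, w⟩ hsw
      rw [Finset.HasAntidiagonal.mem_antidiagonal] at hsw
      simp [coeff_low hm hf.1 hf.2 hsw]
    | zero => simp
    | add x y _ _ hx hy => intro a; rw [mul_add, coeff_add, hx, hy, add_zero]
    | smul c x _ hx => intro a; rw [smul_eq_mul, ← mul_assoc]; exact hx _
  unfold GenInDegLE at h
  rw [h] at hmem
  have h1 := hall _ hmem 1
  rw [one_mul, coeff_sub, coeff_monomial, coeff_monomial, if_pos rfl] at h1
  have hne : (ufin true : (Fin m → Bool) →₀ ℕ) ≠ ufin false := by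
    intro he
    have h0 : ∑ I, utab (m := m) true I = 0 := by
      apply Finset.sum_eq_zero
      intro I _
      have : utab true I = utab false I := DFunLike.congr_fun he I
      rcases utab_disj hm I with h | h <;> omega
    rw [sum_utab hm] at h0
    omega
  rw [if_neg hne] at h1
  simp at h1

lemma gen_mono {V : Type} [Fintype V] [DecidableEq V] {G : SimpleGraph V} {d d' : ℕ} (hd : d ≤ d')
    (h : GenInDegLE G d) : GenInDegLE G d' := by
  apply le_antisymm
  · refine le_trans (le_of_eq h) (Ideal.span_mono ?_)
    rintro f ⟨h1, h2⟩
    exact ⟨h1, h2.trans hd⟩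
  · exact Ideal.span_le.2 fun f hf => hf.1

lemma gen_exists {V : Type} [Fintype V] [DecidableEq V] (G : SimpleGraph V) :
    ∃ d, GenInDegLE G d := by
  obtain ⟨S, hS⟩ := (isNoetherianRing_iff_ideal_fg _).1
    (inferInstance : IsNoetherianRing (MvPolynomial (V → Bool) ℂ)) (toricIdeal G)
  refine ⟨S.sup totalDegree, le_antisymm ?_ (Ideal.span_le.2 fun f hf => hf.1)⟩
  rw [← hS]
  refine Ideal.span_mono fun f hf => ⟨Ideal.subset_span hf, Finset.le_sup (f := totalDegree) hf⟩

/-- for `m ≥ 3`, the toric ideal of the complete graph `K_m` is not generated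
in degree `≤ 2m - 3`; that is, the Markov width satisfies `μ(K_m) ≥ 2m - 2`. -/
theorem completeGraph_not_genInDegLE (m : ℕ) (hm : 3 ≤ m) :
    ¬ GenInDegLE (⊤ : SimpleGraph (Fin m)) (2 * m - 3) ∧
      2 * m - 2 ≤ markovWidth (⊤ : SimpleGraph (Fin m)) := by
  refine ⟨not_gen m hm, ?_⟩
  by_contra! hlt
  have h : GenInDegLE (⊤ : SimpleGraph (Fin m)) (markovWidth (⊤ : SimpleGraph (Fin m))) :=
    Nat.sInf_mem (gen_exists (⊤ : SimpleGraph (Fin m)))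
  exact not_gen m hm (gen_mono (by omega) h)

end BinaryGraphModels
end
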